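/- There is an absolute constant C > 0 such that the following holds. Let a, b ∈ ℝⁿ have nonempty supports A = supp(a) and B = supp(b) and entries bounded in absolute value by c > 0, let ε ∈ (0,1), and let m ≥ C/ε² be an integer. Let h¹,...,hᵐ be mutually independent uniform hash families on {1,...,n}, and for each i let j_A^i and j_B^i be the minimizers of hⁱ over A and over B, and Z_i = 1[hⁱ(j_A^i) = hⁱ(j_B^i)] · a[j_A^i] · b[j_B^i]. Define the idealized estimator F* = (|A∪B|/m) · ∑_{i=1}^{m} Z_i. Then with probability at least 5/6, |F* − ⟨a,b⟩| ≤ ε · c² · √(|A∩B| · |A∪B|). -/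

import Mathlib

open MeasureTheory Finset
open scoped ENNReal


/-- The product measure on `J → ℝ` in which each coordinate is an independent
uniform random variable on `[0,1]`: a uniform hash family on `J`. -/
noncomputable def uniformHash (J : Type*) [Fintype J] : Measure (J → ℝ) :=
  Measure.pi fun _ : J => (volume : Measure ℝ).restrict (Set.Icc 0 1)

/-- The support `{i : x i ≠ 0}` of a vector, as a `Finset`. -/
noncomputable def supp {n : ℕ} (x : Fin n → ℝ) : Finset (Fin n) :=
  Finset.univ.filter fun i => x i ≠ 0

/-- A minimizer of `f` over the nonempty finite set `s` (the minimizer of a uniform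
hash family over a nonempty set is almost surely unique). -/
noncomputable def argminOn {α : Type*} (s : Finset α) (hs : s.Nonempty) (f : α → ℝ) : α :=
  (s.exists_min_image f hs).choose

/-- The MinHash random variable `Z = 1[h(j_A) = h(j_B)] ⬝ a[j_A] ⬝ b[j_B]`, where
`j_A` and `j_B` are the minimizers of the hash `h` over `A` and `B` respectively. -/
noncomputable def Zuw {n : ℕ} (a b : Fin n → ℝ) (A B : Finset (Fin n))
    (hA : A.Nonempty) (hB : B.Nonempty) (h : Fin n → ℝ) : ℝ :=
  (if h (argminOn A hA h) = h (argminOn B hB h) then (1 : ℝ) else 0) *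
    a (argminOn A hA h) * b (argminOn B hB h)

/-- `m` mutually independent uniform hash families on `J`. -/
noncomputable def hashFamilies (m : ℕ) (J : Type*) [Fintype J] :
    Measure (Fin m → J → ℝ) :=
  Measure.pi fun _ : Fin m => uniformHash J

/-!
Almost surely the hash values are distinct. Swapping two elements of `A ∪ B` preserves the law of
the hash family, so the minimizer `J` over `A ∪ B` is uniformly distributed on `A ∪ B`. The
minimizers over `A` and over `B` collide exactly when `J ∈ A ∩ B`, and then both are `J`. So
`Z = f J`, where `f = a * b` on `A ∩ B` and `f = 0` elsewhere: `|A ∪ B| Z` has mean `⟨a, b⟩` and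
variance at most `c⁴ |A ∩ B| |A ∪ B|`. By the Chebyshev inequality, the average of `m` independent
copies fails with probability at most `1 / (m ε²)`, so `C = 6` works.
-/

open ProbabilityTheory
open Function (eval FactorsThrough Injective)

section Concentration

variable {Ω : Type*} [MeasurableSpace Ω] {P : Measure Ω} [IsProbabilityMeasure P] {X : Ω → ℝ}
  {δ t : ℝ}

-- Unlike in the usual form of the Chebyshev inequality, `t = 0` is allowed.
lemma one_sub_le_measureReal_abs_sub_integral_le (hX : MemLp X 2 P) (hδ : 0 < δ) (ht : 0 ≤ t)
    (hvar : Var[X; P] ≤ δ * t ^ 2) : 1 - δ ≤ P.real {ω | |X ω - P[X]| ≤ t} := by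
  rcases ht.eq_or_lt with rfl | ht
  · have hvar_zero : Var[X; P] = 0 := le_antisymm (by simpa using hvar) (variance_nonneg X P)
    have hmem : {ω | |X ω - P[X]| ≤ 0} ∈ ae P := by
      filter_upwards [ae_eq_integral_of_variance_eq_zero hX hvar_zero] with ω hω
      simp [hω]
    rw [measureReal_congr (Filter.eventuallyEq_univ.2 hmem), probReal_univ]
    linarith
  · have hdev : P.real {ω | t ≤ |X ω - P[X]|} ≤ δ :=
      ENNReal.toReal_le_of_le_ofReal hδ.le <| (meas_ge_le_variance_div_sq hX ht).trans <|
        ENNReal.ofReal_le_ofReal <| (div_le_iff₀ (by positivity)).2 hvar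
    have hcover : {ω | |X ω - P[X]| ≤ t} ∪ {ω | t ≤ |X ω - P[X]|} = Set.univ :=
      Set.eq_univ_of_forall fun ω => by simpa using le_total |X ω - P[X]| t
    have hunion := measureReal_union_le (μ := P) {ω | |X ω - P[X]| ≤ t} {ω | t ≤ |X ω - P[X]|}
    rw [hcover, probReal_univ] at hunion
    linarith

variable {ι E : Type*} [Fintype ι] [NormedAddCommGroup E] {Y : Ω → E}

lemma memLp_sum_pi {p : ℝ≥0∞} (hY : MemLp Y p P) :
    MemLp (fun ω : ι → Ω => ∑ i, Y (ω i)) p (Measure.pi fun _ => P) :=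
  memLp_finsetSum _ fun i _ => hY.comp_measurePreserving (measurePreserving_eval _ i)

lemma integral_sum_pi [NormedSpace ℝ E] (hY : Integrable Y P) :
    ∫ ω : ι → Ω, ∑ i, Y (ω i) ∂(Measure.pi fun _ => P) = Fintype.card ι • P[Y] := by
  have hint (i : ι) : Integrable (fun ω : ι → Ω => Y (ω i)) (Measure.pi fun _ => P) :=
    integrable_comp_eval hY
  rw [integral_finsetSum _ fun i _ => hint i]
  simp [integral_comp_eval (μ := fun _ => P) hY.aestronglyMeasurable]

lemma variance_sum_pi_const (hX : MemLp X 2 P) :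
    Var[fun ω : ι → Ω => ∑ i, X (ω i); Measure.pi fun _ => P] = Fintype.card ι * Var[X; P] := by
  simpa [Finset.sum_fn] using variance_sum_pi (ι := ι) (μ := fun _ => P) fun _ => hX

lemma one_sub_le_measureReal_abs_sampleMean_sub_integral_le [Nonempty ι] (hX : MemLp X 2 P)
    (hδ : 0 < δ) (ht : 0 ≤ t) (hvar : Var[X; P] ≤ δ * t ^ 2 * Fintype.card ι) :
    1 - δ ≤ (Measure.pi fun _ : ι => P).real
      {ω | |(∑ i, X (ω i)) / Fintype.card ι - P[X]| ≤ t} := by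
  have hcard : (0 : ℝ) < Fintype.card ι := Nat.cast_pos.2 Fintype.card_pos
  have hsum := one_sub_le_measureReal_abs_sub_integral_le (memLp_sum_pi (ι := ι) hX) hδ
    (mul_nonneg ht hcard.le) <| calc
      _ = Fintype.card ι * Var[X; P] := variance_sum_pi_const hX
      _ ≤ Fintype.card ι * (δ * t ^ 2 * Fintype.card ι) := by gcongr
      _ = δ * (t * Fintype.card ι) ^ 2 := by ring
  have hrescale (x : ℝ) : |x / Fintype.card ι - P[X]| ≤ t ↔
      |x - Fintype.card ι * P[X]| ≤ t * Fintype.card ι := by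
    rw [div_sub' hcard.ne', abs_div, abs_of_pos hcard, div_le_iff₀ hcard]
  simpa only [hrescale, integral_sum_pi (hX.integrable one_le_two), nsmul_eq_mul] using hsum

end Concentration

section Ties

variable {α : Type*} [MeasurableSpace α] [MeasurableEq α]

lemma ae_ne_of_indepFun {Ω : Type*} [MeasurableSpace Ω] {P : Measure Ω} [IsFiniteMeasure P]
    {X Y : Ω → α} (hXY : IndepFun X Y P) (hX : AEMeasurable X P) (hY : AEMeasurable Y P)
    [NullSingletonClass (P.map Y)] : ∀ᵐ ω ∂P, X ω ≠ Y ω := by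
  have hdiag : P.map (fun ω => (X ω, Y ω)) (Set.diagonal α) = 0 := by
    rw [(indepFun_iff_map_prod_eq_prod_map_map hX hY).1 hXY,
      Measure.measure_prod_null measurableSet_diagonal]
    refine .of_forall fun x => ?_
    have hfiber : Prod.mk x ⁻¹' Set.diagonal α = {x} := by ext; simp [eq_comm]
    simp only [hfiber, measure_singleton, Pi.zero_apply]
  rw [Measure.map_apply_of_aemeasurable (hX.prodMk hY) measurableSet_diagonal] at hdiag
  simpa [ae_iff, Set.preimage, Set.mem_diagonal_iff] using hdiag

lemma ae_injective_pi {J : Type*} [Fintype J] (μ : J → Measure α)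
    [∀ j, IsProbabilityMeasure (μ j)] [∀ j, NullSingletonClass (μ j)] :
    ∀ᵐ h ∂Measure.pi μ, Injective h := by
  have hindep := iIndepFun_pi (μ := μ) (X := fun _ => id) fun _ => aemeasurable_id
  have hne (i j : J) (hij : i ≠ j) : ∀ᵐ h ∂Measure.pi μ, h i ≠ h j := by
    have : NullSingletonClass ((Measure.pi μ).map (eval j)) := by
      rw [(measurePreserving_eval μ j).map_eq]
      infer_instance
    exact ae_ne_of_indepFun (hindep.indepFun hij) (measurable_pi_apply i).aemeasurable
      (measurable_pi_apply j).aemeasurable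
  simp only [Injective, ae_all_iff]
  intro i j
  by_cases hij : i = j
  · simp [hij]
  · filter_upwards [hne i j hij] with h hh heq using (hh heq).elim

end Ties

section Argmin

variable {J : Type*} {s : Finset J} (hs : s.Nonempty) {f g : J → ℝ} {j : J}

lemma argminOn_mem : argminOn s hs f ∈ s :=
  (s.exists_min_image f hs).choose_spec.1

lemma isMinOn_argminOn : IsMinOn f s (argminOn s hs f) :=
  (s.exists_min_image f hs).choose_spec.2

lemma argminOn_eq_of_isMinOn (hf : Injective f) (hj : j ∈ s) (hmin : IsMinOn f s j) :
    argminOn s hs f = j :=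
  hf <| le_antisymm (isMinOn_argminOn hs hj) (hmin (argminOn_mem hs))

lemma argminOn_congr (hfg : ∀ j, IsMinOn f s j ↔ IsMinOn g s j) :
    argminOn s hs f = argminOn s hs g := by
  have hpred : (fun j => j ∈ s ∧ ∀ k ∈ s, f j ≤ f k) = fun j => j ∈ s ∧ ∀ k ∈ s, g j ≤ g k :=
    funext fun j => propext (and_congr_right fun _ => hfg j)
  simp only [argminOn, hpred]

lemma apply_argminOn_comp_perm {σ : Equiv.Perm J} (hσ : ∀ k, σ k ∈ s ↔ k ∈ s)
    (hf : Injective f) : σ (argminOn s hs (f ∘ σ)) = argminOn s hs f := by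
  refine (argminOn_eq_of_isMinOn hs hf ((hσ _).2 (argminOn_mem hs)) fun k hk => ?_).symm
  have hk' : σ.symm k ∈ s := (hσ _).1 (by simpa using hk)
  simpa using isMinOn_argminOn hs (f := f ∘ σ) hk'

-- The choice made by `argminOn` depends only on the set of minimizers, so `argminOn` factors
-- through the measurable map sending `f` to that set.
lemma measurable_argminOn [Finite J] [MeasurableSpace J] : Measurable (argminOn s hs) := by
  let minimizers (f : J → ℝ) : Set J := {j | IsMinOn f s j}
  have hmeas : Measurable minimizers := measurable_set_iff.2 fun j =>
    .forall fun k => measurable_const.imp <| measurableSet_setOfPred.1 <|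
      measurableSet_le (measurable_pi_apply j) (measurable_pi_apply k)
  have hfactors : FactorsThrough (argminOn s hs) minimizers := fun f g hfg =>
    argminOn_congr hs fun j => Set.ext_iff.1 hfg j
  rw [← hfactors.extend_comp fun _ => hs.choose]
  exact Measurable.of_discrete.comp hmeas

end Argmin

section UniformLaw

variable {J : Type*} [MeasurableSpace J] [MeasurableSingletonClass J] {s : Finset J}

lemma eq_uniformOn_of_measure_singleton_eq [Countable J] {ν : Measure J} [IsProbabilityMeasure ν]
    (hs : ∀ᵐ j ∂ν, j ∈ s) (hν : ∀ i ∈ s, ∀ j ∈ s, ν {i} = ν {j}) :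
    ν = uniformOn (s : Set J) := by
  classical
  have htotal : ∑ i ∈ s, ν {i} = 1 := by
    rw [sum_measure_singleton, (mem_ae_iff_prob_eq_one s.measurableSet).1 hs]
  refine Measure.ext_of_singleton fun j => ?_
  rw [← Finset.coe_singleton, uniformOn_apply_finset, Finset.coe_singleton]
  by_cases hj : j ∈ s
  · rw [Finset.sum_congr rfl fun i hi => hν i hi j hj, sum_const, nsmul_eq_mul, mul_comm] at htotal
    simpa [hj] using ENNReal.eq_inv_of_mul_eq_one_left htotal
  · have hnull : ν {j} = 0 := measure_mono_null (by simpa using hj) hs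
    simp [hj, hnull]

lemma integral_uniformOn_finset {E : Type*} [NormedAddCommGroup E] [NormedSpace ℝ E]
    [CompleteSpace E] (s : Finset J) (f : J → E) :
    ∫ j, f j ∂uniformOn (s : Set J) = (#s : ℝ)⁻¹ • ∑ j ∈ s, f j := by
  have hint : IntegrableOn f s Measure.count := by
    rw [← (s : Set J).biUnion_of_singleton]
    simp
  rw [uniformOn, ProbabilityTheory.cond, integral_smul_measure, setIntegral_finset s hint]
  simp

end UniformLaw

section MinHash

variable {J : Type*} [Fintype J]

lemma measurePreserving_comp_perm {α : Type*} [MeasurableSpace α] (μ : Measure α) [SigmaFinite μ]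
    (σ : Equiv.Perm J) :
    MeasurePreserving (fun h : J → α => h ∘ σ) (Measure.pi fun _ => μ) (Measure.pi fun _ => μ) :=
  measurePreserving_arrowCongr' (fun _ => μ) (fun _ => μ) σ.symm (.refl α) fun _ => .id μ

variable [MeasurableSpace J] [MeasurableSingletonClass J] {s : Finset J} (hs : s.Nonempty)
  (μ : Measure ℝ) [IsProbabilityMeasure μ] [NullSingletonClass μ]

lemma map_argminOn_pi :
    (Measure.pi fun _ : J => μ).map (argminOn s hs) = uniformOn (s : Set J) := by
  classical
  have hmeas := measurable_argminOn hs
  have := Measure.isProbabilityMeasure_map (μ := Measure.pi fun _ : J => μ) hmeas.aemeasurable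
  refine eq_uniformOn_of_measure_singleton_eq ?_ fun i hi j hj => ?_
  · exact (ae_map_iff hmeas.aemeasurable s.measurableSet).2 (.of_forall fun h => argminOn_mem hs)
  let σ := Equiv.swap i j
  have hσ (k : J) : σ k ∈ s ↔ k ∈ s := by
    simp only [σ, Equiv.swap_apply_def]
    grind
  have hswap : argminOn s hs ⁻¹' {i} =ᵐ[Measure.pi fun _ : J => μ]
      (fun h => h ∘ σ) ⁻¹' (argminOn s hs ⁻¹' {j}) := by
    refine Filter.eventuallyEq_set.2 ?_
    filter_upwards [ae_injective_pi fun _ : J => μ] with h hh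
    simp [← apply_argminOn_comp_perm hs hσ hh, σ, Equiv.swap_apply_eq_iff]
  rw [Measure.map_apply hmeas (measurableSet_singleton i),
    Measure.map_apply hmeas (measurableSet_singleton j), measure_congr hswap,
    (measurePreserving_comp_perm μ σ).measure_preimage
      (hmeas (measurableSet_singleton j)).nullMeasurableSet]

lemma integral_comp_argminOn_pi {E : Type*} [NormedAddCommGroup E] [NormedSpace ℝ E]
    [CompleteSpace E] (f : J → E) :
    ∫ h, f (argminOn s hs h) ∂(Measure.pi fun _ => μ) = (#s : ℝ)⁻¹ • ∑ j ∈ s, f j := by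
  rw [← integral_uniformOn_finset, ← map_argminOn_pi hs μ,
    integral_map (measurable_argminOn hs).aemeasurable .of_discrete]

end MinHash

section Estimator

variable {n : ℕ} (a b : Fin n → ℝ) {A B : Finset (Fin n)} (hA : A.Nonempty) (hB : B.Nonempty)

lemma Zuw_eq_indicator_argminOn_union {h : Fin n → ℝ} (hh : Injective h) :
    Zuw a b A B hA hB h =
      (A ∩ B : Set (Fin n)).indicator (a * b) (argminOn (A ∪ B) hA.inl h) := by
  have hsub : (A : Set (Fin n)) ⊆ ↑(A ∪ B) ∧ (B : Set (Fin n)) ⊆ ↑(A ∪ B) := by simp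
  by_cases hAB : argminOn A hA h = argminOn B hB h
  · have hmem : argminOn A hA h ∈ B := hAB ▸ argminOn_mem hB
    have hmin : IsMinOn h ↑(A ∪ B) (argminOn A hA h) := by
      rw [coe_union]
      rintro k (hk | hk)
      exacts [isMinOn_argminOn hA hk, hAB ▸ isMinOn_argminOn hB hk]
    rw [argminOn_eq_of_isMinOn _ hh (mem_union_left _ (argminOn_mem hA)) hmin]
    simp [Zuw, ← hAB, argminOn_mem, hmem]
  · have hnotMem : argminOn (A ∪ B) hA.inl h ∉ (A ∩ B : Set (Fin n)) := fun hmem => hAB <| by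
      rw [argminOn_eq_of_isMinOn hA hh hmem.1 ((isMinOn_argminOn _).on_subset hsub.1),
        argminOn_eq_of_isMinOn hB hh hmem.2 ((isMinOn_argminOn _).on_subset hsub.2)]
    rw [Set.indicator_of_notMem hnotMem]
    simp [Zuw, hh.eq_iff, hAB]

variable (μ : Measure ℝ) [IsProbabilityMeasure μ] [NullSingletonClass μ]

lemma Zuw_ae_eq_indicator_argminOn_union : Zuw a b A B hA hB =ᵐ[Measure.pi fun _ => μ]
    fun h => (A ∩ B : Set (Fin n)).indicator (a * b) (argminOn (A ∪ B) hA.inl h) := by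
  filter_upwards [ae_injective_pi fun _ => μ] with h hh
  exact Zuw_eq_indicator_argminOn_union a b hA hB hh

lemma memLp_Zuw (p : ℝ≥0∞) : MemLp (Zuw a b A B hA hB) p (Measure.pi fun _ => μ) := by
  refine (memLp_congr_ae (Zuw_ae_eq_indicator_argminOn_union a b hA hB μ)).2 ?_
  have hlaw := (measurable_argminOn (hA.inl (t := B))).measurePreserving (Measure.pi fun _ => μ)
  have := Measure.isFiniteMeasure_map (Measure.pi fun _ => μ) (argminOn (A ∪ B) (hA.inl (t := B)))
  exact (MemLp.of_discrete (f := (A ∩ B : Set (Fin n)).indicator (a * b))).comp_measurePreserving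
    hlaw

lemma integral_comp_Zuw {g : ℝ → ℝ} (hg : g 0 = 0) :
    ∫ h, g (Zuw a b A B hA hB h) ∂(Measure.pi fun _ => μ) =
      (∑ k ∈ A ∩ B, g (a k * b k)) / #(A ∪ B) := calc
  _ = ∫ h, (A ∩ B : Set (Fin n)).indicator (g ∘ (a * b)) (argminOn (A ∪ B) hA.inl h)
        ∂(Measure.pi fun _ => μ) := by
    refine integral_congr_ae ?_
    filter_upwards [Zuw_ae_eq_indicator_argminOn_union a b hA hB μ] with h hh
    rw [hh, Set.indicator_comp_of_zero hg, Function.comp_apply]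
  _ = (#(A ∪ B) : ℝ)⁻¹ • ∑ k ∈ A ∪ B, (A ∩ B : Set (Fin n)).indicator (g ∘ (a * b)) k :=
    integral_comp_argminOn_pi ..
  _ = (∑ k ∈ A ∩ B, g (a k * b k)) / #(A ∪ B) := by
    rw [← coe_inter, sum_indicator_subset _ inter_subset_union, smul_eq_mul,
      inv_mul_eq_div]
    rfl

lemma integral_card_union_mul_Zuw :
    ∫ h, #(A ∪ B) * Zuw a b A B hA hB h ∂(Measure.pi fun _ => μ) = ∑ k ∈ A ∩ B, a k * b k := by
  have hunion : (#(A ∪ B) : ℝ) ≠ 0 := Nat.cast_ne_zero.2 hA.inl.card_ne_zero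
  rw [integral_const_mul, integral_comp_Zuw (g := fun x => x) a b hA hB μ rfl,
    mul_div_cancel₀ _ hunion]

lemma variance_card_union_mul_Zuw_le {K : ℝ} (hK : ∀ k ∈ A ∩ B, |a k * b k| ≤ K) :
    Var[fun h => #(A ∪ B) * Zuw a b A B hA hB h; Measure.pi fun _ => μ] ≤
      K ^ 2 * (#(A ∩ B) * #(A ∪ B)) := by
  have hunion : (#(A ∪ B) : ℝ) ≠ 0 := Nat.cast_ne_zero.2 hA.inl.card_ne_zero
  calc
    _ = #(A ∪ B) ^ 2 * Var[Zuw a b A B hA hB; Measure.pi fun _ => μ] := variance_const_mul ..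
    _ ≤ #(A ∪ B) ^ 2 * ∫ h, Zuw a b A B hA hB h ^ 2 ∂(Measure.pi fun _ => μ) := by
      gcongr
      exact variance_le_expectation_sq (memLp_Zuw a b hA hB μ 2).aestronglyMeasurable
    _ = #(A ∪ B) ^ 2 * ((∑ k ∈ A ∩ B, (a k * b k) ^ 2) / #(A ∪ B)) := by
      rw [integral_comp_Zuw (g := fun x => x ^ 2) a b hA hB μ (by simp)]
    _ ≤ #(A ∪ B) ^ 2 * ((#(A ∩ B) * K ^ 2) / #(A ∪ B)) := by
      gcongr
      rw [← nsmul_eq_mul]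
      exact sum_le_card_nsmul _ _ _ fun k hk => sq_le_sq.2 <| (hK k hk).trans (le_abs_self K)
    _ = K ^ 2 * (#(A ∩ B) * #(A ∪ B)) := by field_simp

end Estimator

theorem minhash_idealized_estimator_general {n : ℕ} {a b : Fin n → ℝ} {A B : Finset (Fin n)}
    (hA : A.Nonempty) (hB : B.Nonempty) {c : ℝ} (ha : ∀ k ∈ A, |a k| ≤ c)
    (hb : ∀ k ∈ B, |b k| ≤ c) (μ : Measure ℝ) [IsProbabilityMeasure μ] [NullSingletonClass μ]
    {δ ε : ℝ} (hδ : 0 < δ) (hε : 0 < ε) {m : ℕ} (hm : δ⁻¹ / ε ^ 2 ≤ m) :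
    1 - δ ≤ (Measure.pi fun _ : Fin m => Measure.pi fun _ : Fin n => μ).real
      {H | |(#(A ∪ B) : ℝ) / m * ∑ i, Zuw a b A B hA hB (H i) - ∑ k ∈ A ∩ B, a k * b k| ≤
        ε * c ^ 2 * √(#(A ∩ B) * #(A ∪ B))} := by
  have hm_pos : (0 : ℝ) < m := (by positivity : 0 < δ⁻¹ / ε ^ 2).trans_le hm
  have : NeZero m := ⟨by exact_mod_cast hm_pos.ne'⟩
  have hm_one : 1 ≤ δ * ε ^ 2 * m := by
    rwa [div_le_iff₀ (by positivity), inv_le_iff_one_le_mul₀' hδ, mul_comm (m : ℝ),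
      ← mul_assoc] at hm
  have hab (k) (hk : k ∈ A ∩ B) : |a k * b k| ≤ c ^ 2 := by
    have hkA := ha k (mem_inter.1 hk).1
    rw [abs_mul, sq]
    exact mul_le_mul hkA (hb k (mem_inter.1 hk).2) (abs_nonneg _) ((abs_nonneg _).trans hkA)
  have hvar : Var[fun h => #(A ∪ B) * Zuw a b A B hA hB h; Measure.pi fun _ => μ] ≤
      δ * (ε * c ^ 2 * √(#(A ∩ B) * #(A ∪ B))) ^ 2 * Fintype.card (Fin m) := calc
    _ ≤ (c ^ 2) ^ 2 * (#(A ∩ B) * #(A ∪ B)) := variance_card_union_mul_Zuw_le a b hA hB μ hab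
    _ ≤ (δ * ε ^ 2 * m) * ((c ^ 2) ^ 2 * (#(A ∩ B) * #(A ∪ B))) :=
      le_mul_of_one_le_left (by positivity) hm_one
    _ = _ := by
      rw [mul_pow, Real.sq_sqrt (by positivity), Fintype.card_fin]
      ring
  have hbound := one_sub_le_measureReal_abs_sampleMean_sub_integral_le (ι := Fin m)
    ((memLp_Zuw a b hA hB μ 2).const_mul _) hδ (by positivity) hvar
  simpa only [← mul_sum, integral_card_union_mul_Zuw, Fintype.card_fin, mul_div_right_comm]
    using hbound

lemma sum_supp_inter_supp {n : ℕ} (a b : Fin n → ℝ) :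
    ∑ k ∈ supp a ∩ supp b, a k * b k = ∑ k, a k * b k :=
  sum_subset (subset_univ _) fun k _ hk => by
    simpa [supp, or_iff_not_imp_left] using hk

/-- There is an absolute constant `C > 0` such that for vectors `a, b ∈ ℝⁿ` with nonempty
supports `A`, `B` and entries bounded by `c > 0`, `ε ∈ (0,1)`, an integer `m ≥ C/ε²`, and
mutually independent uniform hash families `h¹,...,hᵐ`, the idealized estimator
`F* = (|A ∪ B| / m) ∑ᵢ Zᵢ` satisfies `|F* - ⟨a,b⟩| ≤ ε c² √(|A ∩ B| |A ∪ B|)`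
with probability at least `5/6`. -/
theorem minhash_idealized_estimator :
    ∃ C : ℝ, 0 < C ∧
      ∀ (n : ℕ) (a b : Fin n → ℝ) (c : ℝ), 0 < c →
      (∀ i, |a i| ≤ c) → (∀ i, |b i| ≤ c) →
      ∀ (hA : (supp a).Nonempty) (hB : (supp b).Nonempty),
      ∀ ε : ℝ, ε ∈ Set.Ioo (0 : ℝ) 1 →
      ∀ m : ℕ, C / ε ^ 2 ≤ (m : ℝ) →
        (5 : ℝ≥0∞) / 6 ≤
          hashFamilies m (Fin n)
            {H : Fin m → Fin n → ℝ |
              |(((supp a ∪ supp b).card : ℝ) / m) *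
                  (∑ i, Zuw a b (supp a) (supp b) hA hB (H i)) - ∑ k, a k * b k|
                ≤ ε * c ^ 2 *
                    Real.sqrt (((supp a ∩ supp b).card : ℝ) * ((supp a ∪ supp b).card : ℝ))} := by
  refine ⟨6, by norm_num, fun n a b c _ ha hb hA hB ε hε m hm => ?_⟩
  have : IsProbabilityMeasure ((volume : Measure ℝ).restrict (Set.Icc 0 1)) := ⟨by simp⟩
  have hδ : (5 : ℝ≥0∞) / 6 = .ofReal (1 - 6⁻¹) := by norm_num [ENNReal.ofReal_div_of_pos]
  rw [← sum_supp_inter_supp, hδ]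
  exact ENNReal.ofReal_le_of_le_toReal <| minhash_idealized_estimator_general hA hB
    (fun k _ => ha k) (fun k _ => hb k) _ (by norm_num) hε.1 (by rwa [inv_inv])
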